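/- arXiv:2111.10590 — 2 statements merged into one kernel-verified Lean document; each statement's English description precedes it below -/
import Mathlib

section
/- For every even integer n > 6, the number of partitions of n into distinct parts with more odd parts than even parts is strictly greater than the number of partitions of n into distinct parts with more even parts than odd parts; that is, d_o(n) > d_e(n) for all even n > 6. -/
/-- The number of odd parts of a partition, counted with multiplicity. -/
def Nat.Partition.oddCount {n : ℕ} (l : n.Partition) : ℕ :=
  (l.parts.filter (fun p => p % 2 = 1)).card

/-- The number of even parts of a partition, counted with multiplicity. -/
def Nat.Partition.evenCount {n : ℕ} (l : n.Partition) : ℕ :=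
  (l.parts.filter (fun p => p % 2 = 0)).card

/-!
Let `X ^ m` stand for partitions of `2 * m`. Such a partition has an even number `2 * j` of odd
parts, and the pairs of `2 * j` distinct odd parts with `b` distinct even parts have the generating
function `pairGF j b`, a power of `X` times a product of geometric series. Count these pairs with
the sign of `2 * j - b`. For even parts taken in blocks `{2 * i - 1, 2 * i}` most terms cancel
between `(j, i)` and `(i, j)`: what remains is the sum of the series `diag k`, coming from
`2 * k + 2` odd and `2 * k + 1` even parts, minus the sum of the series `excess i s`, coming from
`(i, i + s + 1)`.

Power series are compared coefficientwise. Along a line `2 * i + s = c` the series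
`4 * excess i s` is at most an increment of `majorant`, so four times the sum of the excesses on
the line is at most the final value of `majorant`. This value is `diag k` for `c = 2 * k + 1` and at
most `2 * diag (k - 1) + diag k` for `c = 2 * k`, so the excesses use up at most the diagonal terms
up to finitely many explicit initial ones. The sporadic inequalities that remain are between
rational functions; they follow from expanding denominators until all coefficients are visibly
nonnegative.
-/

open Finset PowerSeries

namespace ParityBias

section CoefficientwiseOrder

variable {R : Type*}

/-- The coefficientwise order on power series: `f ≤ h` when every coefficient of `f` is at most
the corresponding coefficient of `h`. -/
scoped instance [Semiring R] [PartialOrder R] : PartialOrder R⟦X⟧ where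
  le f h := ∀ n, coeff n f ≤ coeff n h
  le_refl _ _ := le_rfl
  le_trans _ _ _ hfg hgh n := (hfg n).trans (hgh n)
  le_antisymm _ _ hfg hgf := PowerSeries.ext fun n => (hfg n).antisymm (hgf n)

theorem nonneg_iff_coeff_nonneg [Semiring R] [PartialOrder R] {f : R⟦X⟧} :
    0 ≤ f ↔ ∀ n, 0 ≤ coeff n f := by
  simp only [LE.le, map_zero]

scoped instance [Semiring R] [PartialOrder R] [IsOrderedRing R] : IsOrderedRing R⟦X⟧ where
  add_le_add_left f h hfh k n := by
    simpa only [map_add] using add_le_add_left (hfh n) (coeff n k)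
  zero_le_one n := by
    rw [map_zero, coeff_one]
    split_ifs
    exacts [zero_le_one, le_rfl]
  mul_le_mul_of_nonneg_left f hf h k hhk n := by
    simp only [coeff_mul]
    exact sum_le_sum fun p _ =>
      mul_le_mul_of_nonneg_left (hhk p.2) (nonneg_iff_coeff_nonneg.1 hf p.1)
  mul_le_mul_of_nonneg_right f hf h k hhk n := by
    simp only [coeff_mul]
    exact sum_le_sum fun p _ =>
      mul_le_mul_of_nonneg_right (hhk p.1) (nonneg_iff_coeff_nonneg.1 hf p.2)

theorem X_nonneg [Semiring R] [PartialOrder R] [ZeroLEOneClass R] : (0 : R⟦X⟧) ≤ X := by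
  intro n
  rw [map_zero, coeff_X]
  split_ifs
  exacts [zero_le_one, le_rfl]

theorem X_pow_nonneg [Semiring R] [PartialOrder R] [IsOrderedRing R] (n : ℕ) :
    (0 : R⟦X⟧) ≤ X ^ n :=
  pow_nonneg X_nonneg n

theorem le_of_natCast_mul_le [Semiring R] [LinearOrder R] [IsStrictOrderedRing R] {c : ℕ}
    (hc : 0 < c) {f h : R⟦X⟧} (hfh : c * f ≤ c * h) : f ≤ h := by
  intro n
  have hn : coeff n (C (c : R) * f) ≤ coeff n (C (c : R) * h) := by
    simpa only [map_natCast] using hfh n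
  rw [coeff_C_mul, coeff_C_mul] at hn
  exact le_of_mul_le_mul_left hn (Nat.cast_pos.2 hc)

end CoefficientwiseOrder

section GeometricSeries

/-- The geometric series `1 / (1 - X ^ k)`, which generates the partitions with all parts equal
to `k`. At `k = 0` it is `1`. -/
noncomputable def geom (k : ℕ) : ℤ⟦X⟧ := PowerSeries.mk fun n => if k ∣ n then 1 else 0

theorem geom_nonneg (k : ℕ) : 0 ≤ geom k := by
  intro n
  rw [map_zero, geom, coeff_mk]
  split_ifs <;> norm_num

theorem one_sub_X_pow_mul_geom {k : ℕ} (hk : 0 < k) : (1 - X ^ k) * geom k = 1 := by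
  ext n
  rw [sub_mul, one_mul, map_sub, coeff_one, coeff_X_pow_mul', geom]
  simp only [coeff_mk]
  rcases Nat.lt_or_ge n k with hnk | hkn
  · have hdvd : k ∣ n ↔ n = 0 := ⟨fun h => Nat.eq_zero_of_dvd_of_lt h hnk, fun h => h ▸ dvd_zero k⟩
    simp only [hdvd, if_neg hnk.not_ge, sub_zero]
  · rw [if_pos hkn, if_neg (by lia : n ≠ 0)]
    simp only [Nat.dvd_sub_iff_left hkn dvd_rfl, sub_self]

theorem eq_of_one_sub_X_pow_mul_eq {k : ℕ} (hk : 0 < k) {f h : ℤ⟦X⟧}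
    (hfh : (1 - X ^ k) * f = (1 - X ^ k) * h) : f = h := by
  linear_combination geom k * hfh + (h - f) * one_sub_X_pow_mul_geom hk

theorem sum_range_X_pow_mul_geom {e n : ℕ} (he : 0 < e) (hn : 0 < n) :
    (∑ i ∈ range n, ((X : ℤ⟦X⟧) ^ e) ^ i) * geom (e * n) = geom e := by
  have hgeom : (1 - (X : ℤ⟦X⟧) ^ e) * ∑ i ∈ range n, (X ^ e) ^ i = 1 - X ^ (e * n) := by
    rw [mul_neg_geom_sum, pow_mul]
  apply eq_of_one_sub_X_pow_mul_eq he
  rw [← mul_assoc, hgeom, one_sub_X_pow_mul_geom (Nat.mul_pos he hn), one_sub_X_pow_mul_geom he]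

/-- The generating function `∏_{i ≤ n} 1 / (1 - X ^ i)` of partitions into parts at most `n`. -/
noncomputable def partGF (n : ℕ) : ℤ⟦X⟧ := ∏ i ∈ Icc 1 n, geom i

theorem partGF_zero : partGF 0 = 1 := rfl

theorem partGF_succ (n : ℕ) : partGF (n + 1) = partGF n * geom (n + 1) :=
  prod_Icc_succ_top (by lia) _

theorem partGF_nonneg (n : ℕ) : 0 ≤ partGF n := prod_nonneg fun i _ => geom_nonneg i

theorem partGF_eq_one_sub_mul (n : ℕ) : partGF n = (1 - X ^ (n + 1)) * partGF (n + 1) := by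
  rw [partGF_succ]
  linear_combination -partGF n * one_sub_X_pow_mul_geom (k := n + 1) n.succ_pos

theorem prod_one_sub_mul_partGF {n : ℕ} {S : Finset ℕ} (hS : S ⊆ Icc 1 n) :
    (∏ s ∈ S, (1 - X ^ s)) * partGF n = ∏ i ∈ Icc 1 n \ S, geom i := by
  rw [partGF, ← prod_sdiff hS, mul_left_comm, ← prod_mul_distrib,
    prod_congr rfl fun s hs => one_sub_X_pow_mul_geom (mem_Icc.1 (hS hs)).1, prod_const_one,
    mul_one]

theorem prod_one_sub_mul_partGF_nonneg {n : ℕ} {S : Finset ℕ} (hS : S ⊆ Icc 1 n) :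
    0 ≤ (∏ s ∈ S, (1 - X ^ s)) * partGF n := by
  rw [prod_one_sub_mul_partGF hS]
  exact prod_nonneg fun i _ => geom_nonneg i

theorem X_pow_sub_X_pow_mul_geom_one_nonneg {a b : ℕ} (hab : a ≤ b) :
    0 ≤ (X ^ a - X ^ b) * geom 1 := by
  have hgeom : (1 - (X : ℤ⟦X⟧)) * ∑ i ∈ range (b - a), X ^ i = 1 - X ^ (b - a) :=
    mul_neg_geom_sum _ _
  have hpow : (X : ℤ⟦X⟧) ^ b = X ^ a * X ^ (b - a) := by rw [← pow_add, Nat.add_sub_cancel' hab]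
  have heq : (X ^ a - X ^ b) * geom 1 = X ^ a * ∑ i ∈ range (b - a), X ^ i := by
    rw [hpow]
    linear_combination -X ^ a * geom 1 * hgeom +
      X ^ a * (∑ i ∈ range (b - a), X ^ i) * one_sub_X_pow_mul_geom one_pos
  rw [heq]
  exact mul_nonneg (X_pow_nonneg a) (sum_nonneg fun i _ => X_pow_nonneg i)

theorem X_pow_sub_mul_prod_one_sub_mul_partGF_nonneg {a b n : ℕ} (hab : a ≤ b) (hn : 1 ≤ n)
    {S : Finset ℕ} (hS : S ⊆ Icc 2 n) :
    0 ≤ (X ^ a - X ^ b) * ((∏ s ∈ S, (1 - X ^ s)) * partGF n) := by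
  have h1 : 1 ∈ Icc 1 n \ S := by
    simp only [mem_sdiff, mem_Icc, le_refl, hn, true_and]
    exact fun h => absurd (mem_Icc.1 (hS h)).1 (by norm_num)
  rw [prod_one_sub_mul_partGF (hS.trans (Icc_subset_Icc_left one_le_two)), ← mul_prod_erase _ _ h1,
    ← mul_assoc]
  exact mul_nonneg (X_pow_sub_X_pow_mul_geom_one_nonneg hab) (prod_nonneg fun i _ => geom_nonneg i)

end GeometricSeries

section PairGeneratingFunction

/-- The generating function of the pairs of `2 * j` distinct odd parts with `b` distinct even
parts, `X ^ m` standing for total size `2 * m`. -/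
noncomputable def pairGF (j b : ℕ) : ℤ⟦X⟧ :=
  X ^ (2 * j ^ 2 + (b + 1).choose 2) * (partGF (2 * j) * partGF b)

/-- The generating function of the pairs of `2 * j` distinct odd parts with `2 * i - 1` or `2 * i`
distinct even parts, `X ^ m` standing for total size `2 * m`. -/
noncomputable def blockGF (j i : ℕ) : ℤ⟦X⟧ :=
  X ^ (2 * j ^ 2 + (2 * i).choose 2) * (partGF (2 * j) * partGF (2 * i))

theorem pairGF_add_pairGF_succ (j i : ℕ) :
    pairGF j (2 * i + 1) + pairGF j (2 * i + 2) = blockGF j (i + 1) := by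
  have hchoose : (2 * i + 2 + 1).choose 2 = (2 * i + 2).choose 2 + (2 * i + 2) := by
    rw [Nat.choose_succ_succ' _ 1, Nat.choose_one_right, add_comm]
  rw [pairGF, pairGF, blockGF, hchoose, partGF_eq_one_sub_mul (2 * i + 1), mul_add_one]
  ring

theorem sum_range_two_mul_add {M : Type*} [AddCommMonoid M] (f : ℕ → M) (n : ℕ) :
    ∑ p ∈ range n, (f (2 * p) + f (2 * p + 1)) = ∑ s ∈ range (2 * n), f s := by
  induction n with
  | zero => rfl
  | succ n ih => rw [sum_range_succ, ih, mul_add_one, sum_range_succ, sum_range_succ, add_assoc]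

theorem sum_range_pairGF (j n : ℕ) :
    ∑ b ∈ range (2 * n + 1), pairGF j b = ∑ i ∈ range (n + 1), blockGF j i := by
  rw [sum_range_succ', ← sum_range_two_mul_add, sum_range_succ' _ n]
  simp only [add_assoc, Nat.reduceAdd, pairGF_add_pairGF_succ]
  rfl

theorem two_mul_choose_two_add (i : ℕ) : (2 * i).choose 2 + i = 2 * i ^ 2 := by
  induction i with
  | zero => rfl
  | succ i ih =>
    rw [mul_add_one, Nat.choose_succ_succ' _ 1, Nat.choose_succ_succ' _ 1, Nat.choose_one_right,
      Nat.choose_one_right]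
    linear_combination ih

/-- The surplus of the blocks with few odd and many even parts over their mirror images, at the
index pair `i < i + s + 1`. -/
noncomputable def excess (i s : ℕ) : ℤ⟦X⟧ := blockGF i (i + s + 1) - blockGF (i + s + 1) i

theorem excess_eq (i s : ℕ) :
    excess i s = X ^ (2 * i ^ 2 + (i + s + 1) * (2 * i + 2 * s + 1)) *
      ((1 - X ^ (s + 1)) * (partGF (2 * i) * partGF (2 * (i + s + 1)))) := by
  have hhigh := two_mul_choose_two_add (i + s + 1)
  have hlow := two_mul_choose_two_add i
  have hexp : 2 * i ^ 2 + (2 * (i + s + 1)).choose 2 =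
      2 * i ^ 2 + (i + s + 1) * (2 * i + 2 * s + 1) := by linarith
  have hexp' : 2 * (i + s + 1) ^ 2 + (2 * i).choose 2 =
      2 * i ^ 2 + (i + s + 1) * (2 * i + 2 * s + 1) + (s + 1) := by linarith
  rw [excess, blockGF, blockGF, hexp, hexp']
  ring

theorem sum_antidiagonal_excess (n : ℕ) : ∑ p ∈ antidiagonal n, excess p.1 p.2 =
    ∑ j ∈ range (n + 1), (blockGF j (n + 1) - blockGF (n + 1) j) := by
  rw [Nat.sum_antidiagonal_eq_sum_range_succ_mk]
  refine sum_congr rfl fun j hj => ?_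
  rw [mem_range] at hj
  rw [excess, Nat.add_sub_cancel' (by lia)]

/-- The generating function of the pairs of `2 * n + 2` distinct odd parts with `2 * n + 1`
distinct even parts: the positive terms that are not absorbed into the blocks. -/
noncomputable def diag (n : ℕ) : ℤ⟦X⟧ := pairGF (n + 1) (2 * n + 1)

theorem diag_nonneg (n : ℕ) : 0 ≤ diag n :=
  mul_nonneg (X_pow_nonneg _) (mul_nonneg (partGF_nonneg _) (partGF_nonneg _))

theorem diag_eq (n : ℕ) :
    diag n = X ^ (4 * n ^ 2 + 7 * n + 3) * (partGF (2 * n + 1) * partGF (2 * n + 2)) := by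
  have hexp : 2 * (n + 1) ^ 2 + (2 * n + 1 + 1).choose 2 = 4 * n ^ 2 + 7 * n + 3 := by
    linear_combination two_mul_choose_two_add (n + 1)
  rw [diag, pairGF, hexp, mul_add_one]
  ring

/-- The generating function of the pairs of at most `2 * n` odd with at most `2 * n` even parts,
an even number of them odd and all parts distinct, counted with the sign of
(number of odd parts) - (number of even parts). -/
noncomputable def signedPairGF (n : ℕ) : ℤ⟦X⟧ :=
  ∑ j ∈ range (n + 1), ∑ b ∈ range (2 * n + 1), ((2 * j - b : ℤ).sign : ℤ⟦X⟧) * pairGF j b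

theorem signedPairGF_succ (n : ℕ) : signedPairGF (n + 1) =
    signedPairGF n + (diag n - ∑ p ∈ antidiagonal n, excess p.1 p.2) := by
  have hrow : ∑ b ∈ range (2 * n + 1), ((2 * (n + 1 : ℕ) - b : ℤ).sign : ℤ⟦X⟧) * pairGF (n + 1) b =
      ∑ i ∈ range (n + 1), blockGF (n + 1) i := by
    rw [← sum_range_pairGF]
    refine sum_congr rfl fun b hb => ?_
    rw [mem_range] at hb
    rw [Int.sign_eq_one_of_pos (by lia), Int.cast_one, one_mul]
  have hcolumns (j : ℕ) (hj : j ∈ range (n + 1)) :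
      ((2 * j - (2 * n + 1 : ℕ) : ℤ).sign : ℤ⟦X⟧) * pairGF j (2 * n + 1) +
        ((2 * j - (2 * n + 2 : ℕ) : ℤ).sign : ℤ⟦X⟧) * pairGF j (2 * n + 2) =
      -blockGF j (n + 1) := by
    rw [mem_range] at hj
    rw [Int.sign_eq_neg_one_of_neg (by lia), Int.sign_eq_neg_one_of_neg (by lia),
      ← pairGF_add_pairGF_succ]
    push_cast
    ring
  have hcorner : ((2 * (n + 1 : ℕ) - (2 * n + 1 : ℕ) : ℤ).sign : ℤ⟦X⟧) = 1 := by
    rw [Int.sign_eq_one_of_pos (by lia), Int.cast_one]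
  have hcorner' : ((2 * (n + 1 : ℕ) - (2 * n + 2 : ℕ) : ℤ).sign : ℤ⟦X⟧) = 0 := by
    rw [Int.sign_eq_zero_iff_zero.2 (by lia), Int.cast_zero]
  have hsplit (j : ℕ) : ∑ b ∈ range (2 * (n + 1) + 1), ((2 * j - b : ℤ).sign : ℤ⟦X⟧) * pairGF j b =
      ∑ b ∈ range (2 * n + 1), ((2 * j - b : ℤ).sign : ℤ⟦X⟧) * pairGF j b +
      (((2 * j - (2 * n + 1 : ℕ) : ℤ).sign : ℤ⟦X⟧) * pairGF j (2 * n + 1) +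
        ((2 * j - (2 * n + 2 : ℕ) : ℤ).sign : ℤ⟦X⟧) * pairGF j (2 * n + 2)) := by
    rw [← add_assoc, mul_add_one, sum_range_succ, sum_range_succ]
  rw [signedPairGF, sum_range_succ, hsplit, hrow, hcorner, hcorner', ← diag]
  simp only [hsplit]
  rw [sum_add_distrib, sum_congr rfl hcolumns, sum_neg_distrib, sum_antidiagonal_excess,
    sum_sub_distrib,
    signedPairGF]
  ring

theorem signedPairGF_eq (n : ℕ) : signedPairGF n =
    ∑ k ∈ range n, (diag k - ∑ p ∈ antidiagonal k, excess p.1 p.2) := by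
  induction n with
  | zero =>
    simp only [signedPairGF, range_one, range_zero, sum_singleton, sum_empty, Int.sign_zero,
      Nat.cast_zero, mul_zero, sub_self, Int.cast_zero, zero_mul, zero_add]
  | succ n ih => rw [signedPairGF_succ, sum_range_succ, ih]

end PairGeneratingFunction

section DistinctParts

/-- The generating function of the `a`-element subsets of `{0, …, M - 1}` by their sum. -/
noncomputable def subsetGF (a M : ℕ) : ℤ⟦X⟧ := ∑ S ∈ powersetCard a (range M), X ^ ∑ x ∈ S, x

theorem subsetGF_zero_left (M : ℕ) : subsetGF 0 M = 1 := by
  rw [subsetGF, powersetCard_zero, sum_singleton, sum_empty, pow_zero]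

theorem subsetGF_succ_succ (a M : ℕ) :
    subsetGF (a + 1) (M + 1) = subsetGF (a + 1) M + X ^ M * subsetGF a M := by
  have hnotMem : M ∉ range M := by simp only [mem_range, lt_irrefl, not_false_eq_true]
  have hS {S : Finset ℕ} (hS : S ∈ powersetCard a (range M)) : M ∉ S :=
    fun h => hnotMem ((mem_powersetCard.1 hS).1 h)
  rw [subsetGF, range_add_one, powersetCard_succ_insert hnotMem, sum_union, sum_image]
  · rw [← subsetGF, subsetGF, subsetGF, mul_sum]
    congr 1
    refine sum_congr rfl fun S h => ?_
    rw [sum_insert (hS h), pow_add]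
  · intro S h T h' heq
    rw [← erase_insert (hS h), heq, erase_insert (hS h')]
  · rw [disjoint_left]
    intro S h h'
    obtain ⟨T, _, rfl⟩ := mem_image.1 h'
    exact hnotMem ((mem_powersetCard.1 h).1 (mem_insert_self M T))

theorem one_sub_X_pow_mul_subsetGF_succ (a M : ℕ) :
    (1 - X ^ (a + 1)) * subsetGF (a + 1) M = (X ^ a - X ^ M) * subsetGF a M := by
  induction M generalizing a with
  | zero =>
    have hempty (a : ℕ) : subsetGF (a + 1) 0 = 0 := by
      rw [subsetGF, powersetCard_eq_empty.2 (by simp only [range_zero, card_empty]; lia), sum_empty]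
    rcases a with _ | a
    · rw [hempty, pow_zero, sub_self, mul_zero, zero_mul]
    · rw [hempty, hempty, mul_zero, mul_zero]
  | succ M ih =>
    rw [subsetGF_succ_succ]
    rcases a with _ | a
    · have h := ih 0
      rw [subsetGF_zero_left] at h ⊢
      rw [subsetGF_zero_left]
      linear_combination h
    · rw [subsetGF_succ_succ]
      linear_combination ih (a + 1) + X ^ (M + 1) * ih a

theorem X_pow_dvd_subsetGF_sub (a M : ℕ) :
    X ^ M ∣ subsetGF a M - X ^ a.choose 2 * partGF a := by
  induction a with
  | zero =>
    rw [subsetGF_zero_left, partGF_zero, Nat.choose_zero_succ, pow_zero, one_mul, sub_self]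
    exact dvd_zero _
  | succ a ih =>
    have hsub : subsetGF (a + 1) M - X ^ (a + 1).choose 2 * partGF (a + 1) = geom (a + 1) *
        (X ^ a * (subsetGF a M - X ^ a.choose 2 * partGF a) - X ^ M * subsetGF a M) := by
      rw [Nat.choose_succ_succ' a 1, Nat.choose_one_right, partGF_succ]
      linear_combination geom (a + 1) * one_sub_X_pow_mul_subsetGF_succ a M -
        subsetGF (a + 1) M * one_sub_X_pow_mul_geom (k := a + 1) a.succ_pos
    rw [hsub]
    exact (dvd_sub (ih.mul_left _) (dvd_mul_right _ _)).mul_left _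

theorem coeff_subsetGF_mul_subsetGF {m M : ℕ} (hm : m < M) (j b : ℕ) :
    coeff m (X ^ (j + b) * (subsetGF (2 * j) M * subsetGF b M)) = coeff m (pairGF j b) := by
  have hexp : 2 * j ^ 2 + (b + 1).choose 2 = j + b + ((2 * j).choose 2 + b.choose 2) := by
    rw [Nat.choose_succ_succ' b 1, Nat.choose_one_right]
    linear_combination -two_mul_choose_two_add j
  have hdvd : X ^ M ∣ X ^ (j + b) * (subsetGF (2 * j) M * subsetGF b M) - pairGF j b := by
    convert ((X_pow_dvd_subsetGF_sub (2 * j) M).mul_left (X ^ (j + b) * subsetGF b M)).add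
      ((X_pow_dvd_subsetGF_sub b M).mul_left
        (X ^ (j + b) * (X ^ (2 * j).choose 2 * partGF (2 * j)))) using 1
    rw [pairGF, hexp]
    ring
  exact sub_eq_zero.1 (by rw [← map_sub]; exact X_pow_dvd_iff.1 hdvd m hm)

end DistinctParts

section Certificates

/-- The polynomial with the given list of coefficients, lowest degree first, as a power series. -/
noncomputable def ofCoeffs : List ℤ → ℤ⟦X⟧
  | [] => 0
  | a :: l => (a : ℤ⟦X⟧) + X * ofCoeffs l

/-- Addition of coefficient lists. -/
def addCoeffs : List ℤ → List ℤ → List ℤ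
  | [], m => m
  | l, [] => l
  | a :: l, b :: m => (a + b) :: addCoeffs l m

/-- Multiplication of a coefficient list by `1 + X ^ e + ⋯ + X ^ (e * (n - 1))`. -/
def mulGeomSum (e : ℕ) : ℕ → List ℤ → List ℤ
  | 0, _ => []
  | n + 1, l => addCoeffs l (List.replicate e 0 ++ mulGeomSum e n l)

theorem ofCoeffs_addCoeffs (l m : List ℤ) :
    ofCoeffs (addCoeffs l m) = ofCoeffs l + ofCoeffs m := by
  induction l generalizing m with
  | nil => simp only [addCoeffs, ofCoeffs, zero_add]
  | cons a l ih =>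
    cases m with
    | nil => simp only [addCoeffs, ofCoeffs, add_zero]
    | cons b m =>
      simp only [addCoeffs, ofCoeffs, ih]
      push_cast
      ring

theorem ofCoeffs_replicate_append (e : ℕ) (l : List ℤ) :
    ofCoeffs (List.replicate e 0 ++ l) = X ^ e * ofCoeffs l := by
  induction e with
  | zero => simp only [List.replicate_zero, List.nil_append, pow_zero, one_mul]
  | succ e ih =>
    simp only [List.replicate_succ, List.cons_append, ofCoeffs, ih, Int.cast_zero]
    ring

theorem ofCoeffs_mulGeomSum (e n : ℕ) (l : List ℤ) :
    ofCoeffs (mulGeomSum e n l) = (∑ i ∈ range n, (X ^ e) ^ i) * ofCoeffs l := by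
  induction n with
  | zero => simp only [mulGeomSum, ofCoeffs, range_zero, sum_empty, zero_mul]
  | succ n ih =>
    simp only [mulGeomSum, ofCoeffs_addCoeffs, ofCoeffs_replicate_append, ih, sum_range_succ',
      pow_succ, ← sum_mul, pow_zero]
    ring

theorem ofCoeffs_nonneg {l : List ℤ} (hl : ∀ a ∈ l, 0 ≤ a) : 0 ≤ ofCoeffs l := by
  induction l with
  | nil => exact le_rfl
  | cons a l ih =>
    obtain ⟨ha, hl⟩ := List.forall_mem_cons.1 hl
    have hcast : (0 : ℤ⟦X⟧) ≤ (a : ℤ⟦X⟧) := by exact_mod_cast ha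
    exact add_nonneg hcast (mul_nonneg X_nonneg (ih hl))

/-- Multiplication of a coefficient list by a geometric sum of degree at most `d` in `X ^ e`,
for every `e` in a list of exponents. -/
def clearDenominators (d : ℕ) (es : List ℕ) (l : List ℤ) : List ℤ :=
  es.foldl (fun l e => mulGeomSum e (d / e + 1) l) l

/-- A partial expansion of the geometric series turns `l / ∏ (1 - X ^ e)` into a fraction whose
numerator can be checked, by computation, to have nonnegative coefficients. -/
theorem ofCoeffs_mul_prod_geom_nonneg (d : ℕ) {es : List ℕ} {l : List ℤ} (hes : ∀ e ∈ es, 0 < e)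
    (hl : ∀ a ∈ clearDenominators d es l, 0 ≤ a) : 0 ≤ ofCoeffs l * (es.map geom).prod := by
  induction es generalizing l with
  | nil =>
    rw [List.map_nil, List.prod_nil, mul_one]
    exact ofCoeffs_nonneg hl
  | cons e es ih =>
    obtain ⟨he, hes⟩ := List.forall_mem_cons.1 hes
    have hrec := mul_nonneg (ih hes hl) (geom_nonneg (e * (d / e + 1)))
    rw [ofCoeffs_mulGeomSum] at hrec
    rw [List.map_cons, List.prod_cons, ← sum_range_X_pow_mul_geom he (d / e).succ_pos]
    convert hrec using 1
    ring

theorem nonneg_of_certificate (d : ℕ) {es : List ℕ} {l : List ℤ} {f : ℤ⟦X⟧}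
    (hf : (es.map fun e => 1 - X ^ e).prod * f = ofCoeffs l) (hes : ∀ e ∈ es, 0 < e)
    (hl : ∀ a ∈ clearDenominators d es l, 0 ≤ a) : 0 ≤ f := by
  have hinv : (es.map geom).prod * (es.map fun e => 1 - X ^ e).prod = 1 := by
    rw [← List.prod_map_mul]
    refine List.prod_eq_one fun x hx => ?_
    obtain ⟨e, he, rfl⟩ := List.mem_map.1 hx
    rw [mul_comm, one_sub_X_pow_mul_geom (hes e he)]
  convert ofCoeffs_mul_prod_geom_nonneg d hes hl using 1
  rw [← hf]
  linear_combination (-f) * hinv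

/-- The embedding of power series into their fraction field, where certificates are checked by
clearing denominators. -/
noncomputable abbrev toFractionField : ℤ⟦X⟧ →+* FractionRing ℤ⟦X⟧ := algebraMap _ _

theorem toFractionField_injective : Function.Injective toFractionField :=
  FaithfulSMul.algebraMap_injective _ _

theorem one_sub_toFractionField_X_pow_ne_zero {k : ℕ} (hk : 0 < k) :
    1 - toFractionField X ^ k ≠ 0 := by
  have hne : (1 - X ^ k : ℤ⟦X⟧) ≠ 0 := left_ne_zero_of_mul_eq_one (one_sub_X_pow_mul_geom hk)
  simpa only [map_sub, map_one, map_pow, map_zero] using toFractionField_injective.ne hne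

theorem toFractionField_geom {k : ℕ} (hk : 0 < k) :
    toFractionField (geom k) = (1 - toFractionField X ^ k)⁻¹ := by
  apply eq_inv_of_mul_eq_one_right
  simpa only [map_mul, map_sub, map_pow, map_one] using
    congrArg toFractionField (one_sub_X_pow_mul_geom hk)

end Certificates

section Telescoping

/-- The telescoping majorant: along `2 * i + s = c` its increments dominate `4 * excess i s`. The
subtraction in the exponent truncates only at `i = s = 0`. -/
noncomputable def majorant (i s : ℕ) : ℤ⟦X⟧ :=
  X ^ ((2 * i + s + 1) ^ 2 + s ^ 2 - (i + 2 + s / 2)) *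
    (partGF (2 * i) * partGF (2 * (i + s)) * geom (2 * i + s))

theorem excess_nonneg (i s : ℕ) : 0 ≤ excess i s := by
  have hcancel := prod_one_sub_mul_partGF_nonneg (n := 2 * (i + s + 1)) (S := {s + 1})
    (singleton_subset_iff.2 (mem_Icc.2 ⟨by lia, by lia⟩))
  rw [prod_singleton] at hcancel
  rw [excess_eq, mul_left_comm (1 - X ^ (s + 1))]
  exact mul_nonneg (X_pow_nonneg _) (mul_nonneg (partGF_nonneg _) hcancel)

/-- The spare factor `X ^ a - X ^ b` is cancelled by a factor `geom 1`, which is provided by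
`partGF m` if `1 ≤ m` and by `partGF n` if `1 ∉ S`. -/
theorem X_pow_sub_mul_prod_one_sub_mul_partGF_mul_nonneg {a b m n : ℕ} (hab : a ≤ b) (hn : 1 ≤ n)
    {S : Finset ℕ} (hS : S ⊆ Icc 1 n) (hm : 1 ≤ m ∨ 1 ∉ S) :
    0 ≤ (X ^ a - X ^ b) * (∏ s ∈ S, (1 - X ^ s)) * (partGF m * partGF n) := by
  rcases hm with hm | h1
  · have hspare := X_pow_sub_mul_prod_one_sub_mul_partGF_nonneg hab hm (empty_subset _)
    rw [prod_empty, one_mul] at hspare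
    convert mul_nonneg hspare (prod_one_sub_mul_partGF_nonneg hS) using 1
    ring
  · have hS2 : S ⊆ Icc 2 n := fun s hs => by
      have hs1 := mem_Icc.1 (hS hs)
      have hne : s ≠ 1 := fun h => h1 (h ▸ hs)
      exact mem_Icc.2 ⟨by lia, hs1.2⟩
    convert mul_nonneg (partGF_nonneg m)
      (X_pow_sub_mul_prod_one_sub_mul_partGF_nonneg hab hn hS2) using 1
    ring

/-- With `h = ⌊r / 2⌋` and `h' = ⌈r / 2⌉` one has
`1 + X ^ r - 2 * X ^ h' = (1 - X ^ h) * (1 - X ^ h') + (X ^ h - X ^ h')`. -/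
theorem one_sub_mul_one_add_sub_two_mul_nonneg {i r : ℕ} (hc : 3 ≤ 2 * i + r) (hr : 1 ≤ r) :
    0 ≤ (1 - X ^ r) * (1 + X ^ r - 2 * X ^ ((r + 1) / 2)) *
      (partGF (2 * i) * partGF (2 * (i + r))) := by
  have hodd := X_pow_sub_mul_prod_one_sub_mul_partGF_mul_nonneg (a := r / 2) (b := (r + 1) / 2)
    (m := 2 * i) (n := 2 * (i + r)) (S := {r}) (by lia) (by lia)
    (singleton_subset_iff.2 (mem_Icc.2 ⟨hr, by lia⟩)) (by simp only [mem_singleton]; lia)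
  have hpow : (X : ℤ⟦X⟧) ^ r = X ^ (r / 2) * X ^ ((r + 1) / 2) := by
    rw [← pow_add]
    congr 1
    lia
  rw [prod_singleton] at hodd
  rcases hr.eq_or_lt with rfl | hr
  · convert hodd using 1
    norm_num only
    ring
  have heven := X_pow_sub_mul_prod_one_sub_mul_partGF_mul_nonneg (a := 0) (b := r / 2)
    (m := 2 * i) (n := 2 * (i + r)) (S := {r, (r + 1) / 2}) (by lia) (by lia)
    (by simp only [insert_subset_iff, singleton_subset_iff, mem_Icc]; lia)
    (by simp only [mem_insert, mem_singleton]; lia)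
  rw [prod_pair (by lia)] at heven
  convert add_nonneg heven hodd using 1
  linear_combination (1 - X ^ r) * (partGF (2 * i) * partGF (2 * (i + r))) * hpow

theorem one_sub_mul_one_sub_sub_eq {R : Type*} [CommRing R] (x : R) {i r k : ℕ}
    (hk : 2 * i + r = k + 1) :
    (1 - x ^ (2 * (i + r))) * (1 - x ^ (2 * (i + r) - 1)) -
        x ^ (4 * r) * ((1 - x ^ (2 * i)) * (1 - x ^ (2 * i - 1))) =
      (1 - x ^ (2 * r)) * (1 + x ^ (2 * r) - x ^ (r + k) - x ^ (r + k + 1)) := by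
  rw [show 2 * (i + r) - 1 = r + k by lia, show 2 * (i + r) = r + k + 1 by lia]
  rcases i with _ | i
  · obtain rfl : r = k + 1 := by lia
    simp only [mul_zero, pow_zero, sub_self, zero_mul, sub_zero]
    ring
  · obtain rfl : k = 2 * i + 1 + r := by lia
    rw [show 2 * (i + 1) - 1 = 2 * i + 1 by lia]
    ring

/-- With `k = 2 * i + r - 1`, the bracket on the right is `1 - X ^ (2 * r)` times
`(1 - X ^ r) ^ 2 + 2 * X ^ r * (1 - X ^ k) + X ^ (r + k) * (1 - X)`. -/
theorem majorant_increment {i r : ℕ} (hc : 3 ≤ 2 * i + r) (hr : 1 ≤ r) :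
    4 * X ^ (r + (r + 1) / 2) * ((1 - X ^ r) * (partGF (2 * i) * partGF (2 * (i + r)))) ≤
      ((1 - X ^ (2 * (i + r))) * (1 - X ^ (2 * (i + r) - 1)) -
          X ^ (4 * r) * ((1 - X ^ (2 * i)) * (1 - X ^ (2 * i - 1)))) *
        (partGF (2 * i) * partGF (2 * (i + r)) * geom (2 * i + r - 1)) := by
  obtain ⟨k, hk⟩ : ∃ k, 2 * i + r = k + 1 := ⟨2 * i + r - 1, by lia⟩
  rw [one_sub_mul_one_sub_sub_eq X hk, show 2 * i + r - 1 = k by lia]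
  have hsquare := mul_nonneg (X_pow_sub_mul_prod_one_sub_mul_partGF_mul_nonneg (a := 0) (b := r)
    (m := 2 * i) (n := 2 * (i + r)) (S := {r, 2 * r}) (by lia) (by lia)
    (by simp only [insert_subset_iff, singleton_subset_iff, mem_Icc]; lia)
    (by simp only [mem_insert, mem_singleton]; lia)) (geom_nonneg k)
  have hlinear := mul_nonneg (mul_nonneg (X_pow_nonneg (r + k)) (geom_nonneg k)) <|
    mul_nonneg (partGF_nonneg (2 * i)) <|
    prod_one_sub_mul_partGF_nonneg (n := 2 * (i + r)) (S := {1, 2 * r})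
    (by simp only [insert_subset_iff, singleton_subset_iff, mem_Icc]; lia)
  have hhalf := mul_nonneg (X_pow_nonneg r) (one_sub_mul_one_add_sub_two_mul_nonneg hc hr)
  rw [prod_pair (by lia)] at hsquare hlinear
  linear_combination hsquare + hlinear + 2 * hhalf -
    2 * (X ^ r * (1 - X ^ (2 * r)) * (partGF (2 * i) * partGF (2 * (i + r)))) *
      one_sub_X_pow_mul_geom (k := k) (by lia)

theorem partGF_two_mul (n : ℕ) :
    partGF (2 * n) =
      (1 - X ^ (2 * (n + 1))) * (1 - X ^ (2 * (n + 1) - 1)) * partGF (2 * (n + 1)) := by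
  rw [partGF_eq_one_sub_mul, partGF_eq_one_sub_mul (2 * n + 1),
    show 2 * (n + 1) - 1 = 2 * n + 1 by lia, show 2 * (n + 1) = 2 * n + 1 + 1 by lia]
  ring

theorem excess_exponent_eq {i s : ℕ} (hc : 2 ≤ 2 * i + s) :
    2 * i ^ 2 + (i + s + 1) * (2 * i + 2 * s + 1) =
      (2 * i + s + 1) ^ 2 + s ^ 2 - (i + 2 + s / 2) + (s + 1 + (s + 1 + 1) / 2) := by
  have : 2 * i ^ 2 + (i + s + 1) * (2 * i + 2 * s + 1) + i =
      (2 * i + s + 1) ^ 2 + s ^ 2 + s := by ring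
  have : i + 2 + s ≤ (2 * i + s + 1) ^ 2 + s ^ 2 := by nlinarith
  lia

theorem four_mul_excess_le {i s : ℕ} (hc : 2 ≤ 2 * i + s) :
    4 * excess i s ≤ majorant i s - X ^ ((2 * i + s + 1) ^ 2 + s ^ 2 - (i + 2 + s / 2)) *
      (X ^ (4 * (s + 1)) * ((1 - X ^ (2 * i)) * (1 - X ^ (2 * i - 1))) *
        (partGF (2 * i) * partGF (2 * (i + s + 1)) * geom (2 * i + s))) := by
  have hinc := mul_le_mul_of_nonneg_left
    (majorant_increment (i := i) (r := s + 1) (by lia) (by lia))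
    (X_pow_nonneg ((2 * i + s + 1) ^ 2 + s ^ 2 - (i + 2 + s / 2)))
  rw [show 2 * i + (s + 1) - 1 = 2 * i + s by lia, ← add_assoc i s 1] at hinc
  rw [excess_eq, majorant, excess_exponent_eq hc, pow_add, partGF_two_mul (i + s)]
  linear_combination hinc

theorem four_mul_excess_zero_le {s : ℕ} (hs : 2 ≤ s) : 4 * excess 0 s ≤ majorant 0 s := by
  have hinc := four_mul_excess_le (i := 0) (s := s) (by lia)
  simpa only [mul_zero, pow_zero, sub_self, zero_mul, sub_zero] using hinc

theorem majorant_add_four_mul_excess_succ_le (i s : ℕ) :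
    majorant i (s + 2) + 4 * excess (i + 1) s ≤ majorant (i + 1) s := by
  have hinc := four_mul_excess_le (i := i + 1) (s := s) (by lia)
  have hexp : (2 * i + (s + 2) + 1) ^ 2 + (s + 2) ^ 2 - (i + 2 + (s + 2) / 2) =
      (2 * (i + 1) + s + 1) ^ 2 + s ^ 2 - (i + 1 + 2 + s / 2) + 4 * (s + 1) := by
    have hsq : (2 * i + (s + 2) + 1) ^ 2 + (s + 2) ^ 2 =
        (2 * (i + 1) + s + 1) ^ 2 + s ^ 2 + 4 * (s + 1) := by ring
    have : i + 3 + s ≤ (2 * (i + 1) + s + 1) ^ 2 + s ^ 2 := by nlinarith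
    rw [hsq]
    lia
  rw [majorant.eq_def i, hexp, pow_add, partGF_two_mul i, ← add_assoc i s 2,
    show i + s + 2 = i + 1 + s + 1 by lia, show 2 * i + (s + 2) = 2 * (i + 1) + s by lia]
  linear_combination hinc

/-- The sum of `excess i (s + e)` over `i + s / 2 = k` with `s` even. -/
noncomputable def excessSum (k e : ℕ) : ℤ⟦X⟧ :=
  ∑ p ∈ antidiagonal k, excess p.1 (2 * p.2 + e)

theorem four_mul_excessSum_le {k e : ℕ} (hk : 2 ≤ 2 * k + e) :
    4 * excessSum k e ≤ majorant k e := by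
  induction k generalizing e with
  | zero => simpa only [excessSum, Nat.antidiagonal_zero, sum_singleton, mul_zero, zero_add] using
      four_mul_excess_zero_le (by lia)
  | succ k ih =>
    have hrec := ih (e := e + 2) (by lia)
    have hshift (d : ℕ) : 2 * (d + 1) + e = 2 * d + (e + 2) := by lia
    rw [excessSum] at hrec
    simp only [excessSum, Nat.sum_antidiagonal_succ', hshift, mul_zero, zero_add]
    linear_combination hrec + majorant_add_four_mul_excess_succ_le k e

end Telescoping

section DiagonalBound

theorem majorant_one (k : ℕ) : majorant k 1 = diag k := by
  have hexp : (2 * k + 1 + 1) ^ 2 + 1 ^ 2 - (k + 2 + 1 / 2) = 4 * k ^ 2 + 7 * k + 3 := by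
    rw [show (2 * k + 1 + 1) ^ 2 + 1 ^ 2 = 4 * k ^ 2 + 8 * k + 5 by ring]
    lia
  rw [majorant, diag_eq, hexp, partGF_succ (2 * k), mul_add_one]
  ring

theorem one_sub_X_mul_partGF_nonneg {n : ℕ} (hn : 1 ≤ n) : 0 ≤ (1 - X) * partGF n := by
  have h := prod_one_sub_mul_partGF_nonneg (S := {1})
    (singleton_subset_iff.2 (mem_Icc.2 ⟨le_rfl, hn⟩))
  rwa [prod_singleton, pow_one] at h

theorem X_pow_sub_mul_partGF_nonneg {a b n : ℕ} (hab : a ≤ b) (hn : 1 ≤ n) :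
    0 ≤ (X ^ a - X ^ b) * partGF n := by
  have h := X_pow_sub_mul_prod_one_sub_mul_partGF_nonneg hab hn (empty_subset _)
  rwa [prod_empty, one_mul] at h

/-- Division by `1 - X` turns the first factor into
`∑ i < t, (X ^ i - X ^ M) + ∑ t ≤ i < M, X ^ i`. -/
theorem one_sub_add_mul_partGF_nonneg {t M m n : ℕ} (ht : t ≤ M) (hm : 1 ≤ m) (hn : 1 ≤ n) :
    0 ≤ (1 - ((t : ℤ⟦X⟧) + 1) * X ^ M + (t : ℤ⟦X⟧) * X ^ (M + 1)) * (partGF m * partGF n) := by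
  have hsum : (1 - X) * (∑ i ∈ range t, ((X : ℤ⟦X⟧) ^ i - X ^ M) + ∑ i ∈ Ico t M, X ^ i) =
      1 - ((t : ℤ⟦X⟧) + 1) * X ^ M + (t : ℤ⟦X⟧) * X ^ (M + 1) := by
    rw [sum_sub_distrib, sum_const, card_range, nsmul_eq_mul, sub_add_eq_add_sub,
      sum_range_add_sum_Ico _ ht, mul_sub, mul_neg_geom_sum]
    ring
  have hfirst : 0 ≤ (∑ i ∈ range t, ((X : ℤ⟦X⟧) ^ i - X ^ M)) * partGF n := by
    rw [sum_mul]
    exact sum_nonneg fun i hi =>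
      X_pow_sub_mul_partGF_nonneg ((mem_range.1 hi).le.trans ht) hn
  have hsecond : 0 ≤ (∑ i ∈ Ico t M, (X : ℤ⟦X⟧) ^ i) * partGF n :=
    mul_nonneg (sum_nonneg fun i _ => X_pow_nonneg i) (partGF_nonneg n)
  convert mul_nonneg (one_sub_X_mul_partGF_nonneg hm) (add_nonneg hfirst hsecond) using 1
  rw [← hsum]
  ring

theorem one_sub_X_pow_mul_geom_mul_geom_nonneg {a b : ℕ} (ha : 0 < a) (hb : 0 < b) :
    0 ≤ (1 - X ^ (a + b)) * (geom a * geom b) := by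
  have hquot : (1 - X ^ (a + b)) * (geom a * geom b) = geom a + X ^ b * geom b := by
    rw [pow_add]
    linear_combination geom a * one_sub_X_pow_mul_geom hb +
      X ^ b * geom b * one_sub_X_pow_mul_geom ha
  rw [hquot]
  exact add_nonneg (geom_nonneg a) (mul_nonneg (X_pow_nonneg b) (geom_nonneg b))

theorem one_sub_X_pow_pow_card_mul_partGF_nonneg {M n : ℕ} {T : Finset ℕ}
    (hT : ∀ a ∈ T, 0 < a ∧ 2 * a < M ∧ M ≤ a + n) :
    0 ≤ (1 - X ^ M) ^ #T * partGF n := by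
  have hinj : Set.InjOn (M - ·) (T : Set ℕ) := fun a ha b hb hab => by
    have := hT a ha
    have := hT b hb
    simp only at hab
    lia
  have hdisj : Disjoint T (T.image (M - ·)) := by
    simp only [disjoint_left, mem_image, not_exists, not_and]
    intro a ha b hb hab
    have := hT a ha
    have := hT b hb
    lia
  have hsub : T ∪ T.image (M - ·) ⊆ Icc 1 n := by
    intro x hx
    simp only [mem_union, mem_image] at hx
    rw [mem_Icc]
    rcases hx with hx | ⟨a, ha, rfl⟩
    · have := hT x hx
      lia
    · have := hT a ha
      lia
  have hpairs : (1 - X ^ M) ^ #T * partGF n = (∏ a ∈ T, (1 - X ^ M) * (geom a * geom (M - a))) *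
      ∏ i ∈ Icc 1 n \ (T ∪ T.image (M - ·)), geom i := by
    rw [partGF, ← prod_sdiff hsub, prod_union hdisj, prod_image hinj, prod_mul_distrib,
      prod_mul_distrib, prod_const]
    ring
  rw [hpairs]
  refine mul_nonneg (prod_nonneg fun a ha => ?_) (prod_nonneg fun i _ => geom_nonneg i)
  have hlt := hT a ha
  have hpair := one_sub_X_pow_mul_geom_mul_geom_nonneg hlt.1 (b := M - a) (by lia)
  rwa [show a + (M - a) = M by lia] at hpair

theorem expand_nonneg {p : ℕ} (hp : p ≠ 0) {f : ℤ⟦X⟧} (hf : 0 ≤ f) : 0 ≤ expand p hp f := by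
  intro n
  rw [map_zero, coeff_expand]
  split_ifs
  exacts [nonneg_iff_coeff_nonneg.1 hf _, le_rfl]

theorem expand_geom {p : ℕ} (hp : p ≠ 0) {k : ℕ} (hk : 0 < k) :
    expand p hp (geom k) = geom (p * k) := by
  have hmap := congrArg (expand p hp) (one_sub_X_pow_mul_geom hk)
  rw [map_mul, map_sub, map_one, map_pow, expand_X, ← pow_mul] at hmap
  apply eq_of_one_sub_X_pow_mul_eq (Nat.mul_pos (Nat.pos_of_ne_zero hp) hk)
  rw [hmap, one_sub_X_pow_mul_geom (Nat.mul_pos (Nat.pos_of_ne_zero hp) hk)]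

theorem quartic_one_nonneg : 0 ≤ geom 1 ^ 7 *
    (126 - 27 * (X * geom 1) - 81 * (X * geom 1) ^ 2 + 64 * (X * geom 1) ^ 4) := by
  refine nonneg_of_certificate 6 (es := List.replicate 11 1) (l := [126, -531, 756, -423, 136])
    (toFractionField_injective ?_) (by decide) (by decide +kernel)
  simp only [ofCoeffs, List.map_replicate, List.prod_replicate, map_mul, map_sub, map_add, map_pow,
    map_one, map_ofNat, toFractionField_geom one_pos, Int.cast_ofNat, Int.cast_neg, map_neg,
    map_zero, pow_one]
  have h1 := one_sub_toFractionField_X_pow_ne_zero one_pos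
  rw [pow_one] at h1
  field_simp
  ring

theorem quartic_nonneg {M : ℕ} (hM : 0 < M) : 0 ≤ geom M ^ 7 *
    (126 - 27 * (X ^ M * geom M) - 81 * (X ^ M * geom M) ^ 2 + 64 * (X ^ M * geom M) ^ 4) := by
  simpa only [map_mul, map_add, map_sub, map_pow, map_ofNat, expand_X, expand_geom hM.ne' one_pos,
    mul_one] using expand_nonneg hM.ne' quartic_one_nonneg

theorem partGF_mul_quartic_nonneg {n : ℕ} (hn : 7 ≤ n) :
    0 ≤ partGF n * partGF (n + 1) * (126 - 27 * (X ^ (n + 2) * geom (n + 2)) -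
      81 * (X ^ (n + 2) * geom (n + 2)) ^ 2 + 64 * (X ^ (n + 2) * geom (n + 2)) ^ 4) := by
  have hcube : 0 ≤ (1 - X ^ (n + 2)) ^ #(Icc 2 4) * partGF n := by
    refine one_sub_X_pow_pow_card_mul_partGF_nonneg fun a ha => ?_
    rw [mem_Icc] at ha
    lia
  have hfourth : 0 ≤ (1 - X ^ (n + 2)) ^ #(Icc 1 4) * partGF (n + 1) := by
    refine one_sub_X_pow_pow_card_mul_partGF_nonneg fun a ha => ?_
    rw [mem_Icc] at ha
    lia
  have hcancel : ((1 - X ^ (n + 2)) * geom (n + 2)) ^ 7 = 1 := by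
    rw [one_sub_X_pow_mul_geom (by lia), one_pow]
  rw [Nat.card_Icc] at hcube hfourth
  convert mul_nonneg (mul_nonneg hcube hfourth) (quartic_nonneg (M := n + 2) (by lia)) using 1
  linear_combination -(partGF n * partGF (n + 1) * (126 - 27 * (X ^ (n + 2) * geom (n + 2)) -
      81 * (X ^ (n + 2) * geom (n + 2)) ^ 2 + 64 * (X ^ (n + 2) * geom (n + 2)) ^ 4)) * hcancel

theorem geom_mul_geom_sub_sq (n : ℕ) : geom (n + 1) * geom (n + 3) - geom (n + 2) ^ 2 =
    X ^ (n + 1) * (1 - X) ^ 2 * (geom (n + 1) * geom (n + 3) * geom (n + 2) ^ 2) := by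
  apply toFractionField_injective
  have h1 := one_sub_toFractionField_X_pow_ne_zero (k := n + 1) (by lia)
  have h2 := one_sub_toFractionField_X_pow_ne_zero (k := n + 2) (by lia)
  have h3 := one_sub_toFractionField_X_pow_ne_zero (k := n + 3) (by lia)
  simp only [map_mul, map_sub, map_pow, map_one, toFractionField_geom (k := n + 1) (by lia),
    toFractionField_geom (k := n + 2) (by lia), toFractionField_geom (k := n + 3) (by lia)]
  field_simp
  ring

theorem partGF_mul_pow_four_le {n : ℕ} (hn : 1 ≤ n) :
    partGF n * partGF (n + 1) * (X ^ (n + 2) * geom (n + 2)) ^ 4 ≤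
      partGF n * partGF (n + 1) *
        (X ^ (4 * n + 7) * (geom (n + 1) * geom (n + 3) * geom (n + 2) ^ 2)) := by
  have hg := geom_nonneg (n + 2)
  have hlogconvex : 0 ≤ partGF n * partGF (n + 1) *
      (geom (n + 1) * geom (n + 3) - geom (n + 2) ^ 2) := by
    rw [geom_mul_geom_sub_sq]
    have h1 := one_sub_X_mul_partGF_nonneg hn
    have h2 := one_sub_X_mul_partGF_nonneg (Nat.le_add_left 1 n)
    have hX := X_pow_nonneg (R := ℤ) (n + 1)
    have ha := geom_nonneg (n + 1)
    have hb := geom_nonneg (n + 3)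
    convert mul_nonneg (mul_nonneg hX (mul_nonneg h1 h2))
      (mul_nonneg (mul_nonneg ha hb) (pow_nonneg hg 2)) using 1
    ring
  have hshift := mul_nonneg (partGF_nonneg n) (X_pow_sub_mul_partGF_nonneg
    (Nat.le_add_right (4 * n + 7) 1) (Nat.le_add_left 1 n))
  rw [← sub_nonneg]
  convert add_nonneg
    (mul_nonneg (mul_nonneg (X_pow_nonneg (4 * n + 7)) (pow_nonneg hg 2)) hlogconvex)
    (mul_nonneg (pow_nonneg hg 4) hshift) using 1
  ring

/-- Put `u = 8 * X ^ (n + 1) * geom (n + 1)`, `h = X ^ (n + 2) * geom (n + 2)` and `w = 9 * h + 1`.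
Up to the nonnegative factor, `64 * X ^ (2 * n + 1) * geom (n + 1) ^ 2 ≤ u * (u + 1) ≤ w * (w + 1)`,
and `128 + 64 * h ^ 4 - w * (w + 1)` is the quartic `126 - 27 * h - 81 * h ^ 2 + 64 * h ^ 4`. -/
theorem partGF_mul_two_add_sub_nonneg {n : ℕ} (hn : 7 ≤ n) : 0 ≤ partGF n * partGF (n + 1) *
    (2 + X ^ (4 * n + 7) * (geom (n + 1) * geom (n + 3) * geom (n + 2) ^ 2) -
      X ^ (2 * n + 1) * geom (n + 1) ^ 2) := by
  have ha := geom_nonneg (n + 1)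
  have hg := geom_nonneg (n + 2)
  have hainv := one_sub_X_pow_mul_geom (k := n + 1) (by lia)
  have hginv := one_sub_X_pow_mul_geom (k := n + 2) (by lia)
  have hfirst := one_sub_add_mul_partGF_nonneg (t := 7) hn (m := n) (n := n + 1) (by lia) (by lia)
  have hsecond := one_sub_add_mul_partGF_nonneg (t := 8) (M := n + 1) (m := n) (n := n + 1)
    (by lia) (by lia) (by lia)
  push_cast at hfirst hsecond
  have hlower : 0 ≤ partGF n * partGF (n + 1) *
      (8 * (X ^ (n + 1) * geom (n + 1)) + 1 - 8 * (X ^ n * geom (n + 1))) := by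
    convert mul_nonneg ha hfirst using 1
    linear_combination -(partGF n * partGF (n + 1)) * hainv
  have hupper : 0 ≤ partGF n * partGF (n + 1) *
      (9 * (X ^ (n + 2) * geom (n + 2)) + 1 - 8 * (X ^ (n + 1) * geom (n + 1))) := by
    convert mul_nonneg (mul_nonneg ha hg) hsecond using 1
    linear_combination -(partGF n * partGF (n + 1)) * (9 * X ^ (n + 2) * geom (n + 2) +
      (1 - X ^ (n + 2)) * geom (n + 2)) * hainv - partGF n * partGF (n + 1) *
      (1 - 8 * X ^ (n + 1) * geom (n + 1)) * hginv
  have hu : 0 ≤ X ^ (n + 1) * geom (n + 1) := mul_nonneg (X_pow_nonneg _) ha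
  have hh : 0 ≤ X ^ (n + 2) * geom (n + 2) := mul_nonneg (X_pow_nonneg _) hg
  have hfour := sub_nonneg.2 (partGF_mul_pow_four_le (n := n) (by lia))
  have hquartic := partGF_mul_quartic_nonneg hn
  refine le_of_natCast_mul_le (c := 64) (by norm_num) ?_
  rw [mul_zero]
  convert add_nonneg
    (add_nonneg (mul_nonneg (a := 64) (by positivity) hfour) hquartic)
    (add_nonneg (mul_nonneg (a := 8 * (X ^ (n + 1) * geom (n + 1))) (by positivity) hlower)
      (mul_nonneg (a := 9 * (X ^ (n + 2) * geom (n + 2)) + 8 * (X ^ (n + 1) * geom (n + 1)) + 2)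
        (by positivity) hupper)) using 1
  push_cast
  ring

theorem partGF_five_mul_two_add_sub_nonneg : 0 ≤ partGF 5 * partGF 6 *
    (2 + X ^ 27 * (geom 6 * geom 8 * geom 7 ^ 2) - X ^ 11 * geom 6 ^ 2) := by
  refine nonneg_of_certificate 30 (es := [1, 1, 2, 3, 3, 4, 4, 5, 5, 6, 6, 6, 7, 7, 8])
    (l := [2, 0, 2, 0, 2, 0, -2, -4, -4, -4, -4, -5, -2, 3, 4, 7, 4, 7, 6, 4, 0, -4, -2, -4, -2,
      -5, -2, 0, 2, 0, 2, 0, 2])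
    (toFractionField_injective ?_) (by decide) (by decide +kernel)
  have hne {k : ℕ} := one_sub_toFractionField_X_pow_ne_zero (k := k)
  have h1 := hne one_pos
  have h2 := hne two_pos
  have h3 := hne three_pos
  have h4 := hne four_pos
  have h5 := hne (k := 5) (by norm_num)
  have h6 := hne (k := 6) (by norm_num)
  have h7 := hne (k := 7) (by norm_num)
  have h8 := hne (k := 8) (by norm_num)
  simp only [ofCoeffs, List.map_cons, List.map_nil, List.prod_cons, List.prod_nil, partGF_succ,
    partGF_zero, map_mul, map_sub, map_add, map_pow, map_one, map_ofNat, map_neg, map_zero,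
    toFractionField_geom (Nat.succ_pos _), Int.cast_ofNat, Int.cast_neg, Int.cast_zero,
    Nat.reduceAdd, zero_add, Int.reduceNeg, pow_one] at *
  field_simp
  ring

theorem majorant_succ_zero_le {k : ℕ} (hk : 2 ≤ k) :
    majorant (k + 1) 0 ≤ 2 * diag k + diag (k + 1) := by
  have hstep : 0 ≤ partGF (2 * k + 1) * partGF (2 * k + 2) *
      (2 + X ^ (4 * (2 * k + 1) + 7) * (geom (2 * k + 2) * geom (2 * k + 4) * geom (2 * k + 3) ^ 2)
        - X ^ (2 * (2 * k + 1) + 1) * geom (2 * k + 2) ^ 2) := by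
    rcases hk.eq_or_lt with rfl | hk
    · exact partGF_five_mul_two_add_sub_nonneg
    · exact partGF_mul_two_add_sub_nonneg (n := 2 * k + 1) (by lia)
  have hexp : (2 * (k + 1) + 0 + 1) ^ 2 + 0 ^ 2 - (k + 1 + 2 + 0 / 2) = 4 * k ^ 2 + 11 * k + 6 := by
    rw [show (2 * (k + 1) + 0 + 1) ^ 2 + 0 ^ 2 = 4 * k ^ 2 + 12 * k + 9 by ring]
    lia
  rw [← sub_nonneg]
  convert mul_nonneg (X_pow_nonneg (4 * k ^ 2 + 7 * k + 3)) hstep using 1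
  rw [majorant, hexp, diag_eq, diag_eq]
  simp only [mul_add_one, add_zero, partGF_succ]
  ring

end DiagonalBound

section MainBound

theorem initial_terms_lower_bound : 4 * (X ^ 4 * (geom 1 * geom 2)) - 4 * X ≤
    4 * diag 0 + 3 * diag 1 + diag 2 - majorant 2 0 -
      4 * (excess 0 0 + excess 0 1 + (excess 0 2 + excess 1 0)) := by
  rw [← sub_nonneg]
  refine nonneg_of_certificate 26 (es := [1, 1, 2, 3, 3, 4, 4, 4, 5, 5, 6])
    (l := [0, 0, 0, 0, 4, 0, -4, -4, -12, -4, 0, 28, 20, 28, 3, -28, -45, -52, -11, -6, 50, 41, 45,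
      9, -6, -25, -40, -14, -13, 14, 12, 21, 5, -4, -5, -8, -1, 0, 4])
    (toFractionField_injective ?_) (by decide) (by decide +kernel)
  have hne {k : ℕ} := one_sub_toFractionField_X_pow_ne_zero (k := k)
  have h1 := hne one_pos
  have h2 := hne two_pos
  have h3 := hne three_pos
  have h4 := hne four_pos
  have h5 := hne (k := 5) (by norm_num)
  have h6 := hne (k := 6) (by norm_num)
  simp only [diag_eq, majorant, excess_eq, ofCoeffs, List.map_cons, List.map_nil, List.prod_cons,
    List.prod_nil, partGF_succ, partGF_zero, map_mul, map_sub, map_add, map_pow, map_one,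
    map_ofNat, map_neg, map_zero, toFractionField_geom (Nat.succ_pos _), Int.cast_ofNat,
    Int.cast_neg, Int.cast_zero, Int.cast_one, Int.reduceNeg, Nat.reduceAdd, Nat.reduceMul,
    Nat.reducePow, Nat.reduceSub, Nat.reduceDiv, zero_add, pow_one] at *
  field_simp
  ring

theorem two_mul_diag_add_le (n : ℕ) :
    2 * diag (n + 2) + (4 * (X ^ 4 * (geom 1 * geom 2)) - 4 * X) ≤
      4 * ∑ k ∈ range (n + 3), (diag k - (excessSum k 0 + excessSum k 1)) := by
  induction n with
  | zero =>
    have h11 := (four_mul_excessSum_le (k := 1) (e := 1) (by norm_num)).trans_eq (majorant_one 1)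
    have h20 := four_mul_excessSum_le (k := 2) (e := 0) (by norm_num)
    have h21 := (four_mul_excessSum_le (k := 2) (e := 1) (by norm_num)).trans_eq (majorant_one 2)
    have hzero (e : ℕ) : excessSum 0 e = excess 0 e := by
      rw [excessSum, Nat.antidiagonal_zero, sum_singleton, mul_zero, zero_add]
    have hone : excessSum 1 0 = excess 0 2 + excess 1 0 := by
      rw [excessSum, Nat.antidiagonal_succ, sum_cons, Nat.antidiagonal_zero, map_singleton,
        sum_singleton]
      rfl
    simp only [sum_range_succ, range_zero, sum_empty, zero_add, hzero, hone]
    linear_combination initial_terms_lower_bound + h11 + h20 + h21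
  | succ n ih =>
    have h0 := (four_mul_excessSum_le (k := n + 3) (e := 0) (by lia)).trans
      (majorant_succ_zero_le (k := n + 2) (by lia))
    have h1 := (four_mul_excessSum_le (k := n + 3) (e := 1) (by lia)).trans_eq (majorant_one _)
    rw [sum_range_succ]
    linear_combination ih + h0 + h1

theorem sum_range_sum_antidiagonal {M : Type*} [AddCommMonoid M] (f : ℕ → ℕ → M) (n : ℕ) :
    ∑ k ∈ range n, ∑ p ∈ antidiagonal k, f p.1 p.2 =
      ∑ i ∈ range n, ∑ s ∈ range (n - i), f i s := by
  simp only [Nat.sum_antidiagonal_eq_sum_range_succ, sum_range_diag_flip]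

theorem sum_excess_le (n : ℕ) : ∑ k ∈ range n, ∑ p ∈ antidiagonal k, excess p.1 p.2 ≤
    ∑ k ∈ range n, (excessSum k 0 + excessSum k 1) := by
  simp only [excessSum, ← sum_add_distrib]
  rw [sum_range_sum_antidiagonal,
    sum_range_sum_antidiagonal fun i p => excess i (2 * p + 0) + excess i (2 * p + 1)]
  simp only [add_zero, sum_range_two_mul_add]
  exact sum_le_sum fun i _ => sum_le_sum_of_subset_of_nonneg
    (range_subset_range.2 (by lia)) fun s _ _ => excess_nonneg i s

theorem le_four_mul_sum_diag_sub_excess (n : ℕ) : 4 * (X ^ 4 * (geom 1 * geom 2)) - 4 * X ≤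
    4 * ∑ k ∈ range (n + 3), (diag k - ∑ p ∈ antidiagonal k, excess p.1 p.2) := by
  have hdiag := diag_nonneg (n + 2)
  have hbound := two_mul_diag_add_le n
  have hexcess := sum_excess_le (n + 3)
  rw [sum_sub_distrib] at hbound ⊢
  linear_combination hbound + 4 * hexcess + 2 * hdiag

theorem coeff_sum_diag_sub_excess_pos {m n : ℕ} (hm : 4 ≤ m) :
    0 < coeff m (∑ k ∈ range (n + 3), (diag k - ∑ p ∈ antidiagonal k, excess p.1 p.2)) := by
  have hgeom : 0 ≤ geom 1 * geom 2 - geom 1 := by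
    have h := mul_nonneg (mul_nonneg (geom_nonneg 1) (X_pow_nonneg 2)) (geom_nonneg 2)
    linear_combination h - geom 1 * one_sub_X_pow_mul_geom two_pos
  have hbound : 4 * (X ^ 4 * geom 1) - 4 * X ≤
      4 * ∑ k ∈ range (n + 3), (diag k - ∑ p ∈ antidiagonal k, excess p.1 p.2) := by
    linear_combination le_four_mul_sum_diag_sub_excess n + 4 * mul_nonneg (X_pow_nonneg 4) hgeom
  have hcoeff := hbound m
  have hfour (f : ℤ⟦X⟧) : coeff m (4 * f) = 4 * coeff m f := by
    rw [show (4 : ℤ⟦X⟧) = C (4 : ℤ) from rfl, coeff_C_mul]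
  rw [map_sub, hfour, hfour, hfour, coeff_X_pow_mul', if_pos hm, geom, coeff_mk,
    if_pos (one_dvd _), coeff_X, if_neg (by lia)] at hcoeff
  lia

end MainBound

section Counting

/-- The distinct odd parts `2 * x + 1`, `x ∈ S.1`, together with the distinct even parts
`2 * x + 2`, `x ∈ S.2`. -/
def partsOf (S : Finset ℕ × Finset ℕ) : Multiset ℕ :=
  S.1.val.map (2 * · + 1) + S.2.val.map (2 * · + 2)

/-- The pair of sets encoding a multiset of distinct positive integers, inverse to `partsOf`. -/
def codeOf (s : Multiset ℕ) : Finset ℕ × Finset ℕ :=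
  ((s.toFinset.filter (· % 2 = 1)).image (· / 2),
    (s.toFinset.filter (· % 2 = 0)).image (· / 2 - 1))

theorem mem_partsOf {S : Finset ℕ × Finset ℕ} {p : ℕ} :
    p ∈ partsOf S ↔ (∃ x ∈ S.1, 2 * x + 1 = p) ∨ ∃ x ∈ S.2, 2 * x + 2 = p := by
  simp only [partsOf, Multiset.mem_add, Multiset.mem_map, mem_val]

theorem pos_of_mem_partsOf {S : Finset ℕ × Finset ℕ} {p : ℕ} (hp : p ∈ partsOf S) : 0 < p := by
  rcases mem_partsOf.1 hp with ⟨x, _, rfl⟩ | ⟨x, _, rfl⟩ <;> lia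

theorem nodup_partsOf (S : Finset ℕ × Finset ℕ) : (partsOf S).Nodup := by
  refine Multiset.nodup_add.2 ⟨S.1.nodup.map fun x y h => by simpa using h,
    S.2.nodup.map fun x y h => by simpa using h, Multiset.disjoint_left.2 fun hodd heven => ?_⟩
  obtain ⟨x, _, rfl⟩ := Multiset.mem_map.1 hodd
  obtain ⟨y, _, hxy⟩ := Multiset.mem_map.1 heven
  lia

theorem sum_partsOf (S : Finset ℕ × Finset ℕ) :
    (partsOf S).sum = 2 * (∑ x ∈ S.1, x + ∑ x ∈ S.2, x + #S.2) + #S.1 := by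
  have hodd : (S.1.val.map (2 * · + 1)).sum = ∑ x ∈ S.1, (2 * x + 1) := rfl
  have heven : (S.2.val.map (2 * · + 2)).sum = ∑ x ∈ S.2, (2 * x + 2) := rfl
  rw [partsOf, Multiset.sum_add, hodd, heven, sum_add_distrib, sum_add_distrib, ← mul_sum,
    ← mul_sum, sum_const, sum_const, smul_eq_mul, smul_eq_mul]
  ring

theorem card_filter_odd_partsOf (S : Finset ℕ × Finset ℕ) :
    ((partsOf S).filter (· % 2 = 1)).card = #S.1 := by
  rw [partsOf, Multiset.filter_add, Multiset.filter_eq_self.2, Multiset.filter_eq_nil.2, add_zero,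
    Multiset.card_map, card_val]
  all_goals
    intro p hp
    obtain ⟨x, _, rfl⟩ := Multiset.mem_map.1 hp
    lia

theorem card_filter_even_partsOf (S : Finset ℕ × Finset ℕ) :
    ((partsOf S).filter (· % 2 = 0)).card = #S.2 := by
  rw [partsOf, Multiset.filter_add, Multiset.filter_eq_nil.2, Multiset.filter_eq_self.2, zero_add,
    Multiset.card_map, card_val]
  all_goals
    intro p hp
    obtain ⟨x, _, rfl⟩ := Multiset.mem_map.1 hp
    lia

theorem codeOf_partsOf (S : Finset ℕ × Finset ℕ) : codeOf (partsOf S) = S := by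
  ext x <;> simp only [codeOf, mem_image, mem_filter, Multiset.mem_toFinset, mem_partsOf]
  · constructor
    · rintro ⟨_, ⟨⟨y, hy, rfl⟩ | ⟨y, _, rfl⟩, hmod⟩, rfl⟩
      · rwa [show (2 * y + 1) / 2 = y by lia]
      · lia
    · exact fun hx => ⟨2 * x + 1, ⟨Or.inl ⟨x, hx, rfl⟩, by lia⟩, by lia⟩
  · constructor
    · rintro ⟨_, ⟨⟨y, _, rfl⟩ | ⟨y, hy, rfl⟩, hmod⟩, rfl⟩
      · lia
      · rwa [show (2 * y + 2) / 2 - 1 = y by lia]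
    · exact fun hx => ⟨2 * x + 2, ⟨Or.inr ⟨x, hx, rfl⟩, by lia⟩, by lia⟩

theorem partsOf_codeOf {s : Multiset ℕ} (hs : s.Nodup) (hpos : ∀ p ∈ s, 0 < p) :
    partsOf (codeOf s) = s := by
  refine (Multiset.Nodup.ext (nodup_partsOf _) hs).2 fun p => ?_
  simp only [mem_partsOf, codeOf, mem_image, mem_filter, Multiset.mem_toFinset]
  constructor
  · rintro (⟨_, ⟨q, ⟨hq, hmod⟩, rfl⟩, rfl⟩ | ⟨_, ⟨q, ⟨hq, hmod⟩, rfl⟩, rfl⟩)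
    · rwa [show 2 * (q / 2) + 1 = q by lia]
    · have := hpos q hq
      rwa [show 2 * (q / 2 - 1) + 2 = q by lia]
  · intro hp
    have := hpos p hp
    rcases Nat.mod_two_eq_zero_or_one p with hmod | hmod
    · exact Or.inr ⟨p / 2 - 1, ⟨p, ⟨hp, hmod⟩, rfl⟩, by lia⟩
    · exact Or.inl ⟨p / 2, ⟨p, ⟨hp, hmod⟩, rfl⟩, by lia⟩

/-- The codes of the partitions of `n` into distinct parts of size at most `2 * M`. -/
def codes (M n : ℕ) : Finset (Finset ℕ × Finset ℕ) :=
  {S ∈ (range M).powerset ×ˢ (range M).powerset | (partsOf S).sum = n}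

theorem codeOf_parts_mem_codes {n M : ℕ} (hn : n ≤ 2 * M) (l : n.Partition)
    (hl : l.parts.Nodup) : codeOf l.parts ∈ codes M n := by
  have hparts := partsOf_codeOf hl fun p hp => l.parts_pos hp
  refine mem_filter.2 ⟨mem_product.2 ⟨mem_powerset.2 fun x hx => ?_,
    mem_powerset.2 fun x hx => ?_⟩, hparts.symm ▸ l.parts_sum⟩
  · have hle := Nat.Partition.le_of_mem_parts (hparts ▸ mem_partsOf.2 (Or.inl ⟨x, hx, rfl⟩))
    exact mem_range.2 (by lia)
  · have hle := Nat.Partition.le_of_mem_parts (hparts ▸ mem_partsOf.2 (Or.inr ⟨x, hx, rfl⟩))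
    exact mem_range.2 (by lia)

/-- The partition into distinct parts with the given code. -/
def partitionOf {n : ℕ} (S : Finset ℕ × Finset ℕ) (hS : (partsOf S).sum = n) : n.Partition :=
  ⟨partsOf S, pos_of_mem_partsOf, hS⟩

theorem card_partition_eq_card_codes {n M : ℕ} (hn : n ≤ 2 * M) (r : ℕ → ℕ → Prop)
    [DecidableRel r] :
    Nat.card {l : n.Partition // l.parts.Nodup ∧ r l.oddCount l.evenCount} =
      #{S ∈ codes M n | r #S.1 #S.2} := by
  have hcode {l : n.Partition} (hl : l.parts.Nodup) : partsOf (codeOf l.parts) = l.parts :=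
    partsOf_codeOf hl fun p hp => l.parts_pos hp
  rw [Nat.card_eq_fintype_card, Fintype.card_subtype]
  refine card_bij' (fun l _ => codeOf l.parts)
    (fun S hS => partitionOf S (mem_filter.1 (mem_filter.1 hS).1).2) ?_ ?_ ?_ ?_
  · intro l hl
    obtain ⟨-, hnodup, hr⟩ := mem_filter.1 hl
    rw [Nat.Partition.oddCount, Nat.Partition.evenCount, ← hcode hnodup, card_filter_odd_partsOf,
      card_filter_even_partsOf] at hr
    exact mem_filter.2 ⟨codeOf_parts_mem_codes hn l hnodup, hr⟩
  · intro S hS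
    refine mem_filter.2 ⟨mem_univ _, nodup_partsOf S, ?_⟩
    rw [Nat.Partition.oddCount, Nat.Partition.evenCount, partitionOf, card_filter_odd_partsOf,
      card_filter_even_partsOf]
    exact (mem_filter.1 hS).2
  · intro l hl
    exact Nat.Partition.ext (hcode (mem_filter.1 hl).2.1)
  · intro S _
    exact codeOf_partsOf S

theorem card_sub_card_eq_sum_sign {α : Type*} (s : Finset α) (f g : α → ℕ) :
    (#{x ∈ s | g x < f x} : ℤ) - #{x ∈ s | f x < g x} = ∑ x ∈ s, (f x - g x : ℤ).sign := by
  rw [card_filter, card_filter]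
  push_cast
  rw [← sum_sub_distrib]
  refine sum_congr rfl fun x _ => ?_
  rcases lt_trichotomy (f x) (g x) with h | h | h
  · rw [if_neg h.not_gt, if_pos h, Int.sign_eq_neg_one_of_neg (by lia), zero_sub]
  · rw [if_neg (by lia), if_neg (by lia), Int.sign_eq_zero_iff_zero.2 (by lia), sub_zero]
  · rw [if_pos h, if_neg h.not_gt, Int.sign_eq_one_of_pos (by lia), sub_zero]

theorem card_filter_codes (M m j b : ℕ) :
    (#{S ∈ codes M (2 * m) | (#S.1 / 2, #S.2) = (j, b)} : ℤ) =
      coeff m (X ^ (j + b) * (subsetGF (2 * j) M * subsetGF b M)) := by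
  have hcodes : {S ∈ codes M (2 * m) | (#S.1 / 2, #S.2) = (j, b)} =
      {S ∈ powersetCard (2 * j) (range M) ×ˢ powersetCard b (range M) |
        m = j + b + (∑ x ∈ S.1, x + ∑ x ∈ S.2, x)} := by
    ext S
    simp only [codes, mem_filter, mem_product, mem_powerset, mem_powersetCard, Prod.mk.injEq,
      sum_partsOf]
    constructor
    · rintro ⟨⟨⟨hA, hB⟩, hsum⟩, hj, hb⟩
      exact ⟨⟨⟨hA, by lia⟩, hB, hb⟩, by lia⟩
    · rintro ⟨⟨⟨hA, hj⟩, hB, hb⟩, hm⟩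
      exact ⟨⟨⟨hA, hB⟩, by lia⟩, by lia, hb⟩
  rw [hcodes, subsetGF, subsetGF, sum_mul_sum, ← sum_product', mul_sum, map_sum, card_filter]
  push_cast
  refine sum_congr rfl fun S _ => ?_
  rw [← pow_add, ← pow_add, coeff_X_pow]

theorem sum_sign_codes {m N : ℕ} (hm : m < 2 * N) :
    ∑ S ∈ codes (2 * N) (2 * m), (#S.1 - #S.2 : ℤ).sign = coeff m (signedPairGF N) := by
  have hmaps : ∀ S ∈ codes (2 * N) (2 * m),
      (#S.1 / 2, #S.2) ∈ range (N + 1) ×ˢ range (2 * N + 1) := by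
    intro S hS
    obtain ⟨hA, hB⟩ := mem_product.1 (mem_filter.1 hS).1
    have hA := card_le_card (mem_powerset.1 hA)
    have hB := card_le_card (mem_powerset.1 hB)
    rw [card_range] at hA hB
    exact mem_product.2 ⟨mem_range.2 (by lia), mem_range.2 (by lia)⟩
  rw [← sum_fiberwise_of_maps_to hmaps, sum_product, signedPairGF, map_sum]
  refine sum_congr rfl fun j _ => ?_
  rw [map_sum]
  refine sum_congr rfl fun b _ => ?_
  have hsign : ∀ S ∈ {S ∈ codes (2 * N) (2 * m) | (#S.1 / 2, #S.2) = (j, b)},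
      (#S.1 - #S.2 : ℤ).sign = (2 * j - b : ℤ).sign := by
    intro S hS
    obtain ⟨hS, hjb⟩ := mem_filter.1 hS
    have hsum := (mem_filter.1 hS).2
    rw [sum_partsOf] at hsum
    rw [Prod.mk.injEq] at hjb
    congr 1
    lia
  rw [sum_congr rfl hsign, sum_const, nsmul_eq_mul, card_filter_codes,
    coeff_subsetGF_mul_subsetGF hm, mul_comm, ← map_intCast (C (R := ℤ)), coeff_C_mul, Int.cast_id]

end Counting

end ParityBias

open ParityBias

/-- For every even integer `n > 6`, among partitions of `n` into distinct parts, those with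
more odd parts than even parts outnumber those with more even parts than odd parts. -/
theorem do_gt_de_even (n : ℕ) (hn : 6 < n) (hev : Even n) :
    Nat.card {l : n.Partition // l.parts.Nodup ∧ l.evenCount < l.oddCount} >
      Nat.card {l : n.Partition // l.parts.Nodup ∧ l.oddCount < l.evenCount} := by
  obtain ⟨m, rfl⟩ := hev
  rw [← two_mul] at *
  have hodd := card_partition_eq_card_codes (n := 2 * m) (M := 2 * (m + 3)) (by lia)
    fun a b => b < a
  have heven := card_partition_eq_card_codes (n := 2 * m) (M := 2 * (m + 3)) (by lia)
    fun a b => a < b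
  have hpos := coeff_sum_diag_sub_excess_pos (m := m) (n := m) (by lia)
  rw [← signedPairGF_eq, ← sum_sign_codes (by lia), ← card_sub_card_eq_sum_sign, ← hodd,
    ← heven] at hpos
  lia
end

section
/- For every integer n ≥ 1, the number of partitions of n with no part equal to 2 and more odd parts than even parts is strictly greater than the number of partitions of n with no part equal to 2 and more even parts than odd parts; that is, p_o^{{2}}(n) > p_e^{{2}}(n). -/
/-!
Exchange the parts `2k + 1` and `2k + 2` for every `k ≥ 1`, and restore the sum by changing the
number of ones. Let `s` be the multiset of parts different from `1` of a partition with `u` ones,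
and let `D` denote the number of odd parts minus the number of even parts. The exchange negates
`D s` and adds `D s` to the sum of `s`, so the new number of ones is `u - D s`, and `D` changes
from `D s + u` to `u - 2 * D s = 3 * u - 2 * (D s + u)`. Hence a negative `D` becomes positive.
As the part `2` is excluded, the exchange creates no ones, so `s` can be recovered from the image;
since `s` determines the partition, this map is injective. It misses the partition into ones, whose
`s` is empty.
-/

/-- The exchange `2k + 1 ↔ 2k + 2` on positive integers; `0` is a junk fixed point. -/
def paritySwap (p : ℕ) : ℕ := if Even p then p - 1 else p + 1

lemma paritySwap_involutive : Function.Involutive paritySwap := by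
  grind [paritySwap, Function.Involutive]

lemma paritySwap_eq_zero_iff {p : ℕ} : paritySwap p = 0 ↔ p = 0 := by
  grind [paritySwap]

lemma paritySwap_eq_one_iff {p : ℕ} : paritySwap p = 1 ↔ p = 2 := by
  grind [paritySwap]

lemma neg_one_pow_paritySwap_succ {p : ℕ} (hp : p ≠ 0) :
    (-1 : ℤ) ^ (paritySwap p + 1) = -(-1) ^ (p + 1) := by
  grind [paritySwap, neg_one_pow_eq_ite]

lemma cast_paritySwap {p : ℕ} (hp : p ≠ 0) : (paritySwap p : ℤ) = p + (-1) ^ (p + 1) := by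
  grind [paritySwap, neg_one_pow_eq_ite]

lemma paritySwap_mem_iff {S : Set ℕ} (hS : ∀ k, 2 * k + 3 ∈ S ↔ 2 * k + 4 ∈ S) {p : ℕ}
    (hp : 3 ≤ p) : paritySwap p ∈ S ↔ p ∈ S := by
  rcases Nat.even_or_odd' (p - 3) with ⟨k, hk | hk⟩
  · obtain rfl : p = 2 * k + 3 := by lia
    simpa [paritySwap, parity_simps] using (hS k).symm
  · obtain rfl : p = 2 * k + 4 := by lia
    simpa [paritySwap, parity_simps] using hS k

/-- The number of odd elements minus the number of even elements, written as a sum of signs so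
that it is visibly additive. -/
def parityExcess (s : Multiset ℕ) : ℤ := (s.map fun p => (-1 : ℤ) ^ (p + 1)).sum

lemma parityExcess_zero : parityExcess 0 = 0 := rfl

lemma parityExcess_add (s t : Multiset ℕ) :
    parityExcess (s + t) = parityExcess s + parityExcess t := by
  simp [parityExcess]

lemma parityExcess_replicate_one (u : ℕ) : parityExcess (Multiset.replicate u 1) = u := by
  simp [parityExcess]

lemma parityExcess_eq_card_sub_card (s : Multiset ℕ) :
    parityExcess s =
      (s.filter (fun p => p % 2 = 1)).card - (s.filter (fun p => p % 2 = 0)).card := by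
  induction s using Multiset.induction_on with
  | empty => simp [parityExcess]
  | cons a s ih =>
    simp only [parityExcess, Multiset.map_cons, Multiset.sum_cons] at ih ⊢
    rcases Nat.mod_two_eq_zero_or_one a with ha | ha <;>
      grind [neg_one_pow_eq_ite, Multiset.filter_cons, Multiset.card_add, Multiset.card_singleton]

lemma parityExcess_parts {n : ℕ} (l : n.Partition) :
    parityExcess l.parts = l.oddCount - l.evenCount :=
  parityExcess_eq_card_sub_card l.parts

lemma parityExcess_map_paritySwap {s : Multiset ℕ} (hs : 0 ∉ s) :
    parityExcess (s.map paritySwap) = -parityExcess s := by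
  rw [parityExcess, parityExcess, Multiset.map_map, ← Multiset.sum_map_neg', Multiset.map_map]
  exact congrArg _ <| Multiset.map_congr rfl fun p hp =>
    neg_one_pow_paritySwap_succ (ne_of_mem_of_not_mem hp hs)

lemma sum_map_paritySwap {s : Multiset ℕ} (hs : 0 ∉ s) :
    ((s.map paritySwap).sum : ℤ) = s.sum + parityExcess s := by
  rw [Nat.cast_multiset_sum, Nat.cast_multiset_sum, Multiset.map_map, parityExcess,
    ← Multiset.sum_map_add]
  exact congrArg _ <| Multiset.map_congr rfl fun p hp =>
    cast_paritySwap (ne_of_mem_of_not_mem hp hs)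

/-- The elements different from `1`; for the parts of a partition of a given integer, they
determine the partition. -/
def nonOnes (s : Multiset ℕ) : Multiset ℕ := s.filter (· ≠ 1)

lemma mem_nonOnes {s : Multiset ℕ} {p : ℕ} : p ∈ nonOnes s ↔ p ∈ s ∧ p ≠ 1 :=
  Multiset.mem_filter

lemma nonOnes_add_replicate_count (s : Multiset ℕ) :
    nonOnes s + Multiset.replicate (s.count 1) 1 = s := by
  simpa [nonOnes, Multiset.filter_eq'] using Multiset.filter_add_not (· ≠ 1) s

lemma nonOnes_add_replicate {s : Multiset ℕ} (hs : 1 ∉ s) (u : ℕ) :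
    nonOnes (s + Multiset.replicate u 1) = s := by
  have h_filter : s.filter (· ≠ 1) = s :=
    Multiset.filter_eq_self.2 fun p hp => ne_of_mem_of_not_mem hp hs
  simp [nonOnes, Multiset.filter_add, h_filter, Multiset.filter_eq_nil, Multiset.mem_replicate]

section Partition

variable {n : ℕ}

lemma zero_notMem_parts (l : n.Partition) : 0 ∉ l.parts :=
  fun h => (l.parts_pos h).false

lemma zero_notMem_nonOnes_parts (l : n.Partition) : 0 ∉ nonOnes l.parts :=
  fun h => zero_notMem_parts l (mem_nonOnes.1 h).1

lemma sum_nonOnes_parts_add_count (l : n.Partition) :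
    (nonOnes l.parts).sum + l.parts.count 1 = n := by
  simpa [l.parts_sum] using congrArg Multiset.sum (nonOnes_add_replicate_count l.parts)

lemma parityExcess_parts_eq_add_count (l : n.Partition) :
    parityExcess l.parts = parityExcess (nonOnes l.parts) + l.parts.count 1 := by
  rw [← parityExcess_replicate_one, ← parityExcess_add, nonOnes_add_replicate_count]

lemma nonOnes_parts_injective :
    Function.Injective fun l : n.Partition => nonOnes l.parts := by
  intro l m (h : nonOnes l.parts = nonOnes m.parts)
  have h_count : l.parts.count 1 = m.parts.count 1 := by
    grind [sum_nonOnes_parts_add_count]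
  apply Nat.Partition.ext
  rw [← nonOnes_add_replicate_count l.parts, ← nonOnes_add_replicate_count m.parts, h, h_count]

/-- The partition of `n` obtained by adding ones to a multiset of positive integers. -/
def padOnes (n : ℕ) (s : Multiset ℕ) (hs : 0 ∉ s) (hn : s.sum ≤ n) : n.Partition where
  parts := s + Multiset.replicate (n - s.sum) 1
  parts_pos {p} hp := by
    refine Nat.pos_of_ne_zero (ne_of_mem_of_not_mem hp ?_)
    simp [hs, Multiset.mem_replicate]
  parts_sum := by simp [hn]

lemma eq_one_or_mem_of_mem_padOnes {s : Multiset ℕ} {hs : 0 ∉ s} {hn : s.sum ≤ n} {p : ℕ}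
    (hp : p ∈ (padOnes n s hs hn).parts) : p = 1 ∨ p ∈ s :=
  (Multiset.mem_add.1 hp).symm.imp_left Multiset.eq_of_mem_replicate

lemma parityExcess_padOnes {s : Multiset ℕ} (hs : 0 ∉ s) (hn : s.sum ≤ n) :
    parityExcess (padOnes n s hs hn).parts = parityExcess s + n - s.sum := by
  rw [padOnes, parityExcess_add, parityExcess_replicate_one, Nat.cast_sub hn, add_sub_assoc]

lemma nonOnes_parts_padOnes {s : Multiset ℕ} (hs : 0 ∉ s) (hn : s.sum ≤ n) (h1 : 1 ∉ s) :
    nonOnes (padOnes n s hs hn).parts = s :=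
  nonOnes_add_replicate h1 _

lemma zero_notMem_map_paritySwap_nonOnes (l : n.Partition) :
    0 ∉ (nonOnes l.parts).map paritySwap := by
  simpa [paritySwap_eq_zero_iff] using zero_notMem_nonOnes_parts l

lemma sum_map_paritySwap_nonOnes_le (l : n.Partition) (hl : l.oddCount ≤ l.evenCount) :
    ((nonOnes l.parts).map paritySwap).sum ≤ n := by
  have h_swap := sum_map_paritySwap (zero_notMem_nonOnes_parts l)
  have h_sum := sum_nonOnes_parts_add_count l
  have h_excess := parityExcess_parts_eq_add_count l
  rw [parityExcess_parts] at h_excess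
  lia

/-- Apply `paritySwap` to the parts different from `1`, then adjust the number of ones. The
hypothesis on `l` guarantees that the exchanged parts fit into `n`. -/
def swapNonOnes (l : n.Partition) (hl : l.oddCount ≤ l.evenCount) : n.Partition :=
  padOnes n ((nonOnes l.parts).map paritySwap) (zero_notMem_map_paritySwap_nonOnes l)
    (sum_map_paritySwap_nonOnes_le l hl)

lemma parityExcess_swapNonOnes (l : n.Partition) (hl : l.oddCount ≤ l.evenCount) :
    parityExcess (swapNonOnes l hl).parts = 3 * l.parts.count 1 - 2 * parityExcess l.parts := by
  have h0 := zero_notMem_nonOnes_parts l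
  have h_sum := sum_nonOnes_parts_add_count l
  rw [swapNonOnes, parityExcess_padOnes, parityExcess_map_paritySwap h0, sum_map_paritySwap h0,
    parityExcess_parts_eq_add_count l]
  lia

lemma evenCount_lt_oddCount_swapNonOnes (l : n.Partition) (hl : l.oddCount < l.evenCount) :
    (swapNonOnes l hl.le).evenCount < (swapNonOnes l hl.le).oddCount := by
  have h_excess := parityExcess_swapNonOnes l hl.le
  rw [parityExcess_parts, parityExcess_parts] at h_excess
  lia

lemma nonOnes_parts_swapNonOnes (l : n.Partition) (hl : l.oddCount ≤ l.evenCount)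
    (h2 : 2 ∉ l.parts) :
    nonOnes (swapNonOnes l hl).parts = (nonOnes l.parts).map paritySwap :=
  nonOnes_parts_padOnes _ _ <| by simp [paritySwap_eq_one_iff, mem_nonOnes, h2]

lemma eq_of_swapNonOnes_eq {l m : n.Partition} (hl : l.oddCount ≤ l.evenCount)
    (hm : m.oddCount ≤ m.evenCount) (hl2 : 2 ∉ l.parts) (hm2 : 2 ∉ m.parts)
    (h : swapNonOnes l hl = swapNonOnes m hm) : l = m := by
  apply nonOnes_parts_injective
  apply Multiset.map_injective paritySwap_involutive.injective
  rw [← nonOnes_parts_swapNonOnes l hl hl2, h, nonOnes_parts_swapNonOnes m hm hm2]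

lemma nonOnes_parts_swapNonOnes_ne_zero (l : n.Partition) (hl : l.oddCount < l.evenCount)
    (h2 : 2 ∉ l.parts) : nonOnes (swapNonOnes l hl.le).parts ≠ 0 := by
  rw [nonOnes_parts_swapNonOnes l hl.le h2, Ne, Multiset.map_eq_zero]
  intro h_nil
  have h_excess := parityExcess_parts_eq_add_count l
  rw [h_nil, parityExcess_parts, parityExcess_zero] at h_excess
  lia

lemma notMem_swapNonOnes {S : Set ℕ} (h1 : 1 ∉ S) (h2 : 2 ∈ S)
    (hS : ∀ k, 2 * k + 3 ∈ S ↔ 2 * k + 4 ∈ S) (l : n.Partition)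
    (hl : l.oddCount ≤ l.evenCount) (h_avoid : ∀ p ∈ S, p ∉ l.parts) :
    ∀ p ∈ S, p ∉ (swapNonOnes l hl).parts := by
  intro p hpS hp
  rcases eq_one_or_mem_of_mem_padOnes hp with rfl | hp
  · exact h1 hpS
  · obtain ⟨q, hq, rfl⟩ := Multiset.mem_map.1 hp
    obtain ⟨hq_mem, hq_one⟩ := mem_nonOnes.1 hq
    have hq_pos := l.parts_pos hq_mem
    have hq_two : q ≠ 2 := ne_of_mem_of_not_mem hq_mem (h_avoid 2 h2)
    exact h_avoid q ((paritySwap_mem_iff hS (by lia)).1 hpS) hq_mem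

/-- The partition of `n` into ones, which is not in the range of `swapNonOnes`. -/
def onesPartition (n : ℕ) : n.Partition where
  parts := Multiset.replicate n 1
  parts_pos hp := by simp [Multiset.eq_of_mem_replicate hp]
  parts_sum := by simp

lemma notMem_onesPartition {p : ℕ} (hp : p ≠ 1) : p ∉ (onesPartition n).parts :=
  fun h => hp (Multiset.eq_of_mem_replicate h)

lemma nonOnes_parts_onesPartition : nonOnes (onesPartition n).parts = 0 := by
  simpa [onesPartition] using nonOnes_add_replicate (Multiset.notMem_zero 1) n

lemma evenCount_lt_oddCount_onesPartition (hn : 1 ≤ n) :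
    (onesPartition n).evenCount < (onesPartition n).oddCount := by
  have h_excess : parityExcess (onesPartition n).parts = n := parityExcess_replicate_one n
  rw [parityExcess_parts] at h_excess
  lia

end Partition

theorem po_gt_pe_no_two_general (S : Set ℕ) (h1 : 1 ∉ S) (h2 : 2 ∈ S)
    (hS : ∀ k, 2 * k + 3 ∈ S ↔ 2 * k + 4 ∈ S) (n : ℕ) (hn : 1 ≤ n) :
    Nat.card {l : n.Partition // (∀ p ∈ S, p ∉ l.parts) ∧ l.evenCount < l.oddCount} >
      Nat.card {l : n.Partition // (∀ p ∈ S, p ∉ l.parts) ∧ l.oddCount < l.evenCount} := by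
  classical
  let swap (l : {l : n.Partition // (∀ p ∈ S, p ∉ l.parts) ∧ l.oddCount < l.evenCount}) :
      {l : n.Partition // (∀ p ∈ S, p ∉ l.parts) ∧ l.evenCount < l.oddCount} :=
    ⟨swapNonOnes l.1 l.2.2.le, notMem_swapNonOnes h1 h2 hS l.1 l.2.2.le l.2.1,
      evenCount_lt_oddCount_swapNonOnes l.1 l.2.2⟩
  have swap_injective : Function.Injective swap := fun l m h =>
    Subtype.ext <| eq_of_swapNonOnes_eq l.2.2.le m.2.2.le (l.2.1 2 h2) (m.2.1 2 h2) <|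
      congrArg Subtype.val h
  let ones : {l : n.Partition // (∀ p ∈ S, p ∉ l.parts) ∧ l.evenCount < l.oddCount} :=
    ⟨onesPartition n, fun _ hp => notMem_onesPartition (ne_of_mem_of_not_mem hp h1),
      evenCount_lt_oddCount_onesPartition hn⟩
  have ones_notMem_range : ones ∉ Set.range swap := by
    rintro ⟨l, hl⟩
    have h_eq : swapNonOnes l.1 l.2.2.le = onesPartition n := congrArg Subtype.val hl
    apply nonOnes_parts_swapNonOnes_ne_zero l.1 l.2.2 (l.2.1 2 h2)
    rw [h_eq, nonOnes_parts_onesPartition]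
  rw [gt_iff_lt, Nat.card_eq_fintype_card, Nat.card_eq_fintype_card]
  exact Fintype.card_lt_of_injective_of_notMem swap swap_injective ones_notMem_range

/-- For every integer `n ≥ 1`, among partitions of `n` with no part equal to `2`, those with
more odd parts than even parts outnumber those with more even parts than odd parts. -/
theorem po_gt_pe_no_two (n : ℕ) (hn : 1 ≤ n) :
    Nat.card {l : n.Partition // 2 ∉ l.parts ∧ l.evenCount < l.oddCount} >
      Nat.card {l : n.Partition // 2 ∉ l.parts ∧ l.oddCount < l.evenCount} := by
  simpa using po_gt_pe_no_two_general {2} (by simp) rfl (by simp) n hn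
end
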